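/- The values of the characteristic functions at the integers uniquely recover G: with convergence in L²(0, π), G(x) = Σ_{n ∈ ℤ} ((−1)ⁿ/π)·(Θ₄(n) + i·Θ₃(n))·e^{2inx}, where Θ₃(λ) = (−Δ₁(λ) + Δ₁(−λ))/2 + sin(πλ) and Θ₄(λ) = (Δ₂(λ) + Δ₂(−λ))/2 + cos(πλ). -/

import Mathlib

open MeasureTheory Real Set Filter

noncomputable def Delta1 (a₁ : ℝ) (K G : ℝ → ℂ) (lam : ℂ) : ℂ :=
  Complex.sin (π * lam)
    + (∫ x in (a₁ / 2)..(π - a₁ / 2), K x * Complex.cos (lam * ((π - 2 * x : ℝ) : ℂ)))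
    - ∫ x in (a₁ / 2)..(π - a₁ / 2), G x * Complex.sin (lam * ((π - 2 * x : ℝ) : ℂ))

noncomputable def Delta2 (a₁ : ℝ) (K G : ℝ → ℂ) (lam : ℂ) : ℂ :=
  -Complex.cos (π * lam)
    + (∫ x in (a₁ / 2)..(π - a₁ / 2), K x * Complex.sin (lam * ((π - 2 * x : ℝ) : ℂ)))
    + ∫ x in (a₁ / 2)..(π - a₁ / 2), G x * Complex.cos (lam * ((π - 2 * x : ℝ) : ℂ))

noncomputable def Theta3 (a₁ : ℝ) (K G : ℝ → ℂ) (lam : ℂ) : ℂ :=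
  (-Delta1 a₁ K G lam + Delta1 a₁ K G (-lam)) / 2 + Complex.sin (π * lam)

noncomputable def Theta4 (a₁ : ℝ) (K G : ℝ → ℂ) (lam : ℂ) : ℂ :=
  (Delta2 a₁ K G lam + Delta2 a₁ K G (-lam)) / 2 + Complex.cos (π * lam)

/-!
`Θ₃` and `Θ₄` are built from the odd part of `Δ₁` and the even part of `Δ₂`, so the integrals of `K`
cancel, as do the free terms `sin πλ` and `cos πλ`. What is left of `Θ₄ + iΘ₃` is the Fourier
transform of `G`, modulated by `e^{iπλ}`. At an integer `λ = n` the modulation is `(-1)ⁿ`, and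
`((-1)ⁿ / π) (Θ₄(n) + iΘ₃(n))` is the `n`-th Fourier coefficient of `G` on `(0, π)`. The claim is
then the `L²` convergence of Fourier series.
-/

section LpSeries

variable {ι α E : Type*} [MeasurableSpace α] {μ : Measure α} [NormedAddCommGroup E] {p : ENNReal}

lemma toLp_finsetSum {g : ι → α → E} (hg : ∀ i, MemLp (g i) p μ) (s : Finset ι) :
    (memLp_finsetSum' s fun i _ => hg i).toLp (∑ i ∈ s, g i) = ∑ i ∈ s, (hg i).toLp (g i) := by
  induction s using Finset.cons_induction with
  | empty => exact MemLp.toLp_zero _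
  | cons i s hi ih =>
    simp only [Finset.sum_cons]
    rw [← ih, ← MemLp.toLp_add]

lemma hasSum_toLp_iff_tendsto_eLpNorm [Fact (1 ≤ p)] {f : α → E} {g : ι → α → E}
    (hf : MemLp f p μ) (hg : ∀ i, MemLp (g i) p μ) :
    HasSum (fun i => (hg i).toLp (g i)) (hf.toLp f) ↔
      Tendsto (fun s : Finset ι => eLpNorm (fun x => f x - ∑ i ∈ s, g i x) p μ) atTop (nhds 0) := by
  simp only [HasSum, SummationFilter.unconditional_filter, ← toLp_finsetSum hg]
  rw [Lp.tendsto_Lp_iff_tendsto_eLpNorm'']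
  refine tendsto_congr fun s => ?_
  rw [eLpNorm_sub_comm]
  congr! 2 with x
  simp only [Pi.sub_apply, Finset.sum_apply]

end LpSeries

section FourierSeries

lemma tendsto_eLpNorm_sub_sum_fourierCoeff {T : ℝ} [Fact (0 < T)] {f : AddCircle T → ℂ}
    (hf : MemLp f 2 AddCircle.haarAddCircle) :
    Tendsto
      (fun s : Finset ℤ => eLpNorm (fun t => f t - ∑ n ∈ s, fourierCoeff f n * fourier n t)
        2 AddCircle.haarAddCircle)
      atTop (nhds 0) := by
  have hmono (n : ℤ) : MemLp (fun t : AddCircle T => fourierCoeff f n * fourier n t) 2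
      AddCircle.haarAddCircle :=
    ((fourier n).memLp _ ℂ).const_mul (fourierCoeff f n)
  refine (hasSum_toLp_iff_tendsto_eLpNorm hf hmono).mp ?_
  have hsum := hasSum_fourier_series_L2 hf.toLp
  rwa [fourierCoeff_congr_ae hf.coeFn_toLp] at hsum

lemma eLpNorm_comp_coe_restrict_Ioc {T : ℝ} [hT : Fact (0 < T)] {E : Type*} [NormedAddCommGroup E]
    {p : ENNReal} {f : AddCircle T → E} (hf : AEStronglyMeasurable f volume) (a : ℝ) :
    eLpNorm (fun x : ℝ => f x) p (volume.restrict (Ioc a (a + T))) =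
      ENNReal.ofReal T ^ (1 / p).toReal * eLpNorm f p AddCircle.haarAddCircle := by
  have hcoe := eLpNorm_comp_measurePreserving (p := p) hf (AddCircle.measurePreserving_mk T a)
  rwa [AddCircle.volume_eq_smul_haarAddCircle,
    eLpNorm_smul_measure_of_ne_zero (ENNReal.ofReal_pos.mpr hT.out).ne', smul_eq_mul] at hcoe

lemma tendsto_eLpNorm_sub_sum_fourierCoeffOn {a b : ℝ} (hab : a < b) {f : ℝ → ℂ}
    (hf : MemLp f 2 (volume.restrict (Ioc a b))) :
    Tendsto
      (fun s : Finset ℤ => eLpNorm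
        (fun x : ℝ => f x - ∑ n ∈ s, fourierCoeffOn hab f n * fourier n (x : AddCircle (b - a)))
        2 (volume.restrict (Ioc a b)))
      atTop (nhds 0) := by
  have : Fact (0 < b - a) := ⟨sub_pos.mpr hab⟩
  have hb : a + (b - a) = b := add_sub_cancel a b
  set F := AddCircle.liftIoc (b - a) a f
  have hF : MemLp F 2 volume := MemLp.memLp_liftIoc (by rwa [hb])
  have hmeas (s : Finset ℤ) :
      AEStronglyMeasurable (fun t => F t - ∑ n ∈ s, fourierCoeff F n * fourier n t) volume :=
    hF.1.sub (Continuous.aestronglyMeasurable (by fun_prop))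
  have hcircle := ENNReal.Tendsto.const_mul
    (a := ENNReal.ofReal (b - a) ^ (1 / 2 : ENNReal).toReal)
    (tendsto_eLpNorm_sub_sum_fourierCoeff hF.haarAddCircle) (Or.inr (by finiteness))
  rw [mul_zero] at hcircle
  refine hcircle.congr fun s => ?_
  rw [← eLpNorm_comp_coe_restrict_Ioc (hmeas s) a, hb]
  refine eLpNorm_congr_ae ?_
  filter_upwards [ae_restrict_mem measurableSet_Ioc] with x hx
  have hFx : F x = f x := AddCircle.liftIoc_coe_apply (by rwa [hb])
  rw [hFx]
  rfl

-- `fourierCoeffOn` on `(a, b]` uses the circle of length `b - a`, here literally `π - 0`.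
lemma fourier_coe_apply_pi_sub_zero (n : ℤ) (x : ℝ) :
    fourier n (x : AddCircle (π - 0)) = Complex.exp (2 * Complex.I * n * x) := by
  have hπ : (π : ℂ) ≠ 0 := Complex.ofReal_ne_zero.mpr pi_ne_zero
  rw [fourier_coe_apply, sub_zero]
  congr 1
  field_simp

end FourierSeries

section Subinterval

variable {E : Type*} [NormedAddCommGroup E] {f : ℝ → E} {a b c d : ℝ}

lemma intervalIntegrable_of_memLp_Ioo {p : ENNReal} (hp : 1 ≤ p)
    (hf : MemLp f p (volume.restrict (Ioo a b)))
    (hac : a ≤ c) (hcd : c ≤ d) (hdb : d ≤ b) : IntervalIntegrable f volume c d := by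
  have hint : IntegrableOn f (Ioo a b) := hf.integrable hp
  rw [intervalIntegrable_iff_integrableOn_Ioo_of_le hcd]
  exact hint.mono_set (Ioo_subset_Ioo hac hdb)

lemma intervalIntegral_eq_of_ae_eq_zero_outside [NormedSpace ℝ E]
    (hac : a ≤ c) (hcd : c ≤ d) (hdb : d ≤ b)
    (hf : ∀ᵐ x ∂(volume : Measure ℝ), x ∉ Ioo c d → f x = 0) :
    ∫ x in a..b, f x = ∫ x in c..d, f x := by
  rw [intervalIntegral.integral_of_le hcd, intervalIntegral.integral_of_le (by linarith)]
  refine setIntegral_eq_of_subset_of_ae_sdiff_eq_zero measurableSet_Ioc.nullMeasurableSet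
    (Ioc_subset_Ioc hac hdb) ?_
  filter_upwards [hf] with x hx hxcd
  exact hx fun h => hxcd.2 (Ioo_subset_Ioc_self h)

end Subinterval

section CharacteristicFunctions

variable {a₁ : ℝ} {K G : ℝ → ℂ}

lemma Theta3_eq_integral (lam : ℂ) :
    Theta3 a₁ K G lam =
      ∫ x in (a₁ / 2)..(π - a₁ / 2), G x * Complex.sin (lam * ((π - 2 * x : ℝ) : ℂ)) := by
  simp only [Theta3, Delta1, neg_mul, mul_neg, Complex.cos_neg, Complex.sin_neg,
    intervalIntegral.integral_neg]
  ring

lemma Theta4_eq_integral (lam : ℂ) :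
    Theta4 a₁ K G lam =
      ∫ x in (a₁ / 2)..(π - a₁ / 2), G x * Complex.cos (lam * ((π - 2 * x : ℝ) : ℂ)) := by
  simp only [Theta4, Delta2, neg_mul, mul_neg, Complex.cos_neg, Complex.sin_neg,
    intervalIntegral.integral_neg]
  ring

lemma Theta4_add_I_mul_Theta3 (hG : IntervalIntegrable G volume (a₁ / 2) (π - a₁ / 2)) (lam : ℂ) :
    Theta4 a₁ K G lam + Complex.I * Theta3 a₁ K G lam =
      Complex.exp (π * lam * Complex.I) *
        ∫ x in (a₁ / 2)..(π - a₁ / 2), Complex.exp (-(2 * Complex.I * lam * x)) * G x := by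
  rw [Theta3_eq_integral, Theta4_eq_integral, ← intervalIntegral.integral_const_mul,
    ← intervalIntegral.integral_const_mul, ← intervalIntegral.integral_add
      (hG.mul_continuousOn (by fun_prop)) ((hG.mul_continuousOn (by fun_prop)).const_mul _)]
  refine intervalIntegral.integral_congr fun x _ => ?_
  have hexp : Complex.exp (π * lam * Complex.I) * Complex.exp (-(2 * Complex.I * lam * x)) =
      Complex.cos (lam * ((π - 2 * x : ℝ) : ℂ)) +
        Complex.sin (lam * ((π - 2 * x : ℝ) : ℂ)) * Complex.I := by
    rw [← Complex.exp_add, ← Complex.exp_mul_I]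
    push_cast
    ring_nf
  linear_combination -(G x) * hexp

lemma fourierCoeffOn_eq_Theta (ha₁ : 0 ≤ a₁) (ha₁' : a₁ ≤ π)
    (hG : IntervalIntegrable G volume (a₁ / 2) (π - a₁ / 2))
    (hG0 : ∀ᵐ x ∂(volume : Measure ℝ), x ∉ Ioo (a₁ / 2) (π - a₁ / 2) → G x = 0) (n : ℤ) :
    fourierCoeffOn pi_pos G n =
      ((-1 : ℂ) ^ n / (π : ℂ)) * (Theta4 a₁ K G n + Complex.I * Theta3 a₁ K G n) := by
  have hmod : Complex.exp (π * n * Complex.I) = (-1) ^ n := by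
    rw [← Complex.exp_pi_mul_I, ← Complex.exp_int_mul]
    ring_nf
  have hsign : ((-1 : ℂ) ^ n) * (-1) ^ n = 1 := by
    rw [← mul_zpow, neg_one_mul, neg_neg, one_zpow]
  have hsupp : ∫ x in (0 : ℝ)..π, Complex.exp (-(2 * Complex.I * n * x)) * G x =
      ∫ x in (a₁ / 2)..(π - a₁ / 2), Complex.exp (-(2 * Complex.I * n * x)) * G x := by
    refine intervalIntegral_eq_of_ae_eq_zero_outside (by linarith) (by linarith) (by linarith) ?_
    filter_upwards [hG0] with x hx hxa
    rw [hx hxa, mul_zero]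
  calc fourierCoeffOn pi_pos G n
    _ = (1 / π : ℂ) * ∫ x in (0 : ℝ)..π, Complex.exp (-(2 * Complex.I * n * x)) * G x := by
      simp only [fourierCoeffOn_eq_integral, fourier_coe_apply_pi_sub_zero, Int.cast_neg, mul_neg,
        neg_mul, smul_eq_mul, Complex.real_smul, sub_zero, Complex.ofReal_div, Complex.ofReal_one]
    _ = ((-1 : ℂ) ^ n / (π : ℂ)) * (Theta4 a₁ K G n + Complex.I * Theta3 a₁ K G n) := by
      rw [hsupp, Theta4_add_I_mul_Theta3 hG, hmod, ← mul_assoc,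
        div_mul_eq_mul_div ((-1 : ℂ) ^ n), hsign]

end CharacteristicFunctions

theorem G_recovered_from_spectra_general {a₁ : ℝ} (ha₁ : 0 ≤ a₁) (ha₁' : a₁ ≤ π) {K G : ℝ → ℂ}
    (_hK : IntervalIntegrable K volume (a₁ / 2) (π - a₁ / 2))
    (hG : MemLp G 2 (volume.restrict (Ioo 0 π)))
    (hG0 : ∀ᵐ x ∂(volume : Measure ℝ), x ∉ Ioo (a₁ / 2) (π - a₁ / 2) → G x = 0) :
    Tendsto
      (fun s : Finset ℤ => eLpNorm
        (fun x : ℝ => G x - ∑ n ∈ s,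
          ((-1 : ℂ) ^ n / (π : ℂ)) *
            (Theta4 a₁ K G (n : ℂ) + Complex.I * Theta3 a₁ K G (n : ℂ)) *
            Complex.exp (2 * Complex.I * (n : ℂ) * (x : ℂ)))
        2 (volume.restrict (Ioo 0 π)))
      atTop (nhds 0) := by
  have hGint : IntervalIntegrable G volume (a₁ / 2) (π - a₁ / 2) :=
    intervalIntegrable_of_memLp_Ioo one_le_two hG (by linarith) (by linarith) (by linarith)
  simp only [← fourierCoeffOn_eq_Theta ha₁ ha₁' hGint hG0, ← fourier_coe_apply_pi_sub_zero]
  rw [restrict_Ioo_eq_restrict_Ioc] at hG ⊢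
  exact tendsto_eLpNorm_sub_sum_fourierCoeffOn pi_pos hG

/-- The values of the characteristic functions at the integers uniquely recover `G`:
with convergence in `L²(0,π)`,
`G(x) = Σ_{n ∈ ℤ} ((−1)ⁿ/π)·(Θ₄(n) + i·Θ₃(n))·e^{2inx}`. -/
theorem G_recovered_from_spectra (a₁ : ℝ) (ha₁ : 0 < a₁) (ha₁' : a₁ < π)
    (K G : ℝ → ℂ)
    (hK : MemLp K 2 (volume.restrict (Ioo 0 π)))
    (hG : MemLp G 2 (volume.restrict (Ioo 0 π)))
    (hK0 : ∀ᵐ x ∂(volume : Measure ℝ), x ∉ Ioo (a₁ / 2) (π - a₁ / 2) → K x = 0)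
    (hG0 : ∀ᵐ x ∂(volume : Measure ℝ), x ∉ Ioo (a₁ / 2) (π - a₁ / 2) → G x = 0) :
    Tendsto
      (fun N : ℕ => eLpNorm
        (fun x : ℝ => G x - ∑ n ∈ Finset.Icc (-(N : ℤ)) (N : ℤ),
          ((-1 : ℂ) ^ n / (π : ℂ)) *
            (Theta4 a₁ K G (n : ℂ) + Complex.I * Theta3 a₁ K G (n : ℂ)) *
            Complex.exp (2 * Complex.I * (n : ℂ) * (x : ℂ)))
        2 (volume.restrict (Ioo 0 π)))
      atTop (nhds 0) :=
  (G_recovered_from_spectra_general ha₁.le ha₁'.le (intervalIntegrable_of_memLp_Ioo one_le_two hK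
    (by linarith) (by linarith) (by linarith)) hG hG0).comp (Finset.tendsto_Icc_neg (R := ℤ))
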